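/- For integers n, j, k, l ≥ 0 with n + j = k + l + 1, the identity D′_{njkl} = 0 holds, where D′_{njkl} = (n+1)·S̃_{n−1,jkl} + (j+1)·S̃_{n,j−1,kl} − (k+1)·S̃_{n,j,k+1,l} − (l+1)·S̃_{n,j,k,l+1}. -/

import Mathlib

open Set MeasureTheory

/-- The generalized Laguerre polynomial `L_n^{(1)}` (with parameter 1). -/
noncomputable def Lag (n : ℕ) (x : ℝ) : ℝ :=
  ∑ k ∈ Finset.range (n + 1),
    (-1 : ℝ)^k * ((n + 1).choose (n - k) : ℝ) * x^k / (Nat.factorial k : ℝ)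

/-- The normalized radial eigenfunctions of `-Δ + r²` in dimension `d = 4`:
`e_n(r) = √(2/(n+1)) L_n^{(1)}(r²) e^{-r²/2}`. -/
noncomputable def efun (n : ℕ) (r : ℝ) : ℝ :=
  Real.sqrt (2 / (n + 1)) * Lag n (r^2) * Real.exp (-r^2 / 2)

/-- The interaction coefficients of the four-dimensional Schrödinger–Newton–Hooke
resonant system. -/
noncomputable def Scoef (n j k l : ℕ) : ℝ :=
  ∫ r in Ioi (0:ℝ), ∫ s in Ioi (0:ℝ),
    efun n r * efun j s * efun k s * efun l r / (max r s)^2 * r^3 * s^3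

/-- `S̃_{njkl} = √((n+1)(j+1)(k+1)(l+1)) S_{njkl}`, with the convention that it
vanishes whenever any index is negative. -/
noncomputable def Stilde (n j k l : ℤ) : ℝ :=
  if 0 ≤ n ∧ 0 ≤ j ∧ 0 ≤ k ∧ 0 ≤ l then
    Real.sqrt (((n:ℝ) + 1) * ((j:ℝ) + 1) * ((k:ℝ) + 1) * ((l:ℝ) + 1)) *
      Scoef n.toNat j.toNat k.toNat l.toNat
  else 0

open Polynomial

/-- A polynomial times the Gaussian `exp (-s²)` is integrable on the real line. -/
theorem integrable_eval_mul_exp_neg_sq (p : ℝ[X]) :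
    Integrable fun s : ℝ => p.eval s * Real.exp (-s ^ 2) := by
  induction p using Polynomial.induction_on' with
  | add p q hp hq => simpa only [eval_add, add_mul] using! hp.add hq
  | monomial n a =>
    have h := (integrable_rpow_mul_exp_neg_mul_sq (b := 1) one_pos
      (s := (n : ℝ)) (by linarith [n.cast_nonneg (α := ℝ)])).const_mul a
    simpa [Real.rpow_natCast, mul_assoc] using h

theorem integrable_eval_sq_mul_pow_mul_exp_neg_sq (p : ℝ[X]) (m : ℕ) :
    Integrable fun s : ℝ => p.eval (s ^ 2) * s ^ m * Real.exp (-s ^ 2) :=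
  (integrable_eval_mul_exp_neg_sq (p.comp (X ^ 2) * X ^ m)).congr (.of_forall fun s => by simp)

theorem continuous_eval_sq_mul_pow_mul_exp_neg_sq (p : ℝ[X]) (m : ℕ) :
    Continuous fun s : ℝ => p.eval (s ^ 2) * s ^ m * Real.exp (-s ^ 2) := by
  have := p.continuous
  fun_prop

theorem hasDerivAt_eval_sq_mul_pow_mul_exp_neg_sq (p : ℝ[X]) (m : ℕ) (s : ℝ) :
    HasDerivAt (fun s : ℝ => p.eval (s ^ 2) * s ^ (m + 1) * Real.exp (-s ^ 2))
      ((2 * (X * derivative p).eval (s ^ 2) + (m + 1) * p.eval (s ^ 2)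
        - 2 * s ^ 2 * p.eval (s ^ 2)) * s ^ m * Real.exp (-s ^ 2)) s := by
  have hsq : HasDerivAt (fun s : ℝ => s ^ 2) (2 * s) s := by simpa using hasDerivAt_pow 2 s
  have hp := (p.hasDerivAt (s ^ 2)).comp s hsq
  have hm := hasDerivAt_pow (m + 1) s
  refine ((hp.mul hm).mul hsq.neg.exp).congr_deriv ?_
  simp
  ring

/-- The mass of `q(s²) s³ exp (-s²)` between `0` and `r`. -/
noncomputable def innerMass (q : ℝ[X]) (r : ℝ) : ℝ :=
  ∫ s in (0 : ℝ)..r, q.eval (s ^ 2) * s ^ 3 * Real.exp (-s ^ 2)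

/-- The mass of `q(s²) s exp (-s²)` beyond `r`. -/
noncomputable def outerMass (q : ℝ[X]) (r : ℝ) : ℝ :=
  ∫ s in Ioi r, q.eval (s ^ 2) * s ^ 1 * Real.exp (-s ^ 2)

theorem hasDerivAt_innerMass (q : ℝ[X]) (r : ℝ) :
    HasDerivAt (innerMass q) (q.eval (r ^ 2) * r ^ 3 * Real.exp (-r ^ 2)) r :=
  (continuous_eval_sq_mul_pow_mul_exp_neg_sq q 3).integral_hasStrictDerivAt 0 r |>.hasDerivAt

theorem outerMass_eq_sub (q : ℝ[X]) (r : ℝ) :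
    outerMass q r = outerMass q 0
      - ∫ s in (0 : ℝ)..r, q.eval (s ^ 2) * s ^ 1 * Real.exp (-s ^ 2) := by
  have hi := integrable_eval_sq_mul_pow_mul_exp_neg_sq q 1
  have h := intervalIntegral.integral_interval_add_Ioi (hi.integrableOn (s := Ioi 0))
    (hi.integrableOn (s := Ioi r))
  rw [outerMass, outerMass]
  linarith

theorem hasDerivAt_outerMass (q : ℝ[X]) (r : ℝ) :
    HasDerivAt (outerMass q) (-(q.eval (r ^ 2) * r ^ 1 * Real.exp (-r ^ 2))) r := by
  rw [funext (outerMass_eq_sub q)]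
  exact ((continuous_eval_sq_mul_pow_mul_exp_neg_sq q 1).integral_hasStrictDerivAt
    0 r).hasDerivAt.const_sub _

theorem integrable_mul_innerMass (p q : ℝ[X]) (m : ℕ) :
    Integrable fun r : ℝ => p.eval (r ^ 2) * r ^ m * Real.exp (-r ^ 2) * innerMass q r := by
  refine (integrable_eval_sq_mul_pow_mul_exp_neg_sq p m).mul_bdd
    (c := ∫ s, ‖q.eval (s ^ 2) * s ^ 3 * Real.exp (-s ^ 2)‖) ?_ (.of_forall fun r => ?_)
  · exact (continuous_iff_continuousAt.2 fun r =>
      (hasDerivAt_innerMass q r).continuousAt).aestronglyMeasurable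
  · exact intervalIntegral.norm_integral_le_integral_norm_uIoc.trans
      (setIntegral_le_integral (integrable_eval_sq_mul_pow_mul_exp_neg_sq q 3).norm
        (.of_forall fun _ => norm_nonneg _))

theorem integrable_mul_outerMass (p q : ℝ[X]) (m : ℕ) :
    Integrable fun r : ℝ => p.eval (r ^ 2) * r ^ m * Real.exp (-r ^ 2) * outerMass q r := by
  refine (integrable_eval_sq_mul_pow_mul_exp_neg_sq p m).mul_bdd
    (c := ∫ s, ‖q.eval (s ^ 2) * s ^ 1 * Real.exp (-s ^ 2)‖) ?_ (.of_forall fun r => ?_)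
  · exact (continuous_iff_continuousAt.2 fun r =>
      (hasDerivAt_outerMass q r).continuousAt).aestronglyMeasurable
  · exact (norm_integral_le_integral_norm _).trans
      (setIntegral_le_integral (integrable_eval_sq_mul_pow_mul_exp_neg_sq q 1).norm
        (.of_forall fun _ => norm_nonneg _))

theorem innerMass_add (p q : ℝ[X]) (r : ℝ) :
    innerMass (p + q) r = innerMass p r + innerMass q r := by
  simp only [innerMass, eval_add, add_mul]
  exact intervalIntegral.integral_add
    (integrable_eval_sq_mul_pow_mul_exp_neg_sq p 3).intervalIntegrable
    (integrable_eval_sq_mul_pow_mul_exp_neg_sq q 3).intervalIntegrable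

theorem innerMass_smul (c : ℝ) (q : ℝ[X]) (r : ℝ) :
    innerMass (c • q) r = c * innerMass q r := by
  simp only [innerMass, eval_smul, smul_eq_mul, mul_assoc, intervalIntegral.integral_const_mul]

theorem outerMass_add (p q : ℝ[X]) (r : ℝ) :
    outerMass (p + q) r = outerMass p r + outerMass q r := by
  simp only [outerMass, eval_add, add_mul]
  exact integral_add (integrable_eval_sq_mul_pow_mul_exp_neg_sq p 1).integrableOn
    (integrable_eval_sq_mul_pow_mul_exp_neg_sq q 1).integrableOn

theorem outerMass_smul (c : ℝ) (q : ℝ[X]) (r : ℝ) :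
    outerMass (c • q) r = c * outerMass q r := by
  simp only [outerMass, eval_smul, smul_eq_mul, mul_assoc, integral_const_mul]

/-- The integrand in `r` of the interaction of `p(r²)` with `q(s²)`, after integrating out `s`. -/
noncomputable def pairingDensity (p q : ℝ[X]) (r : ℝ) : ℝ :=
  p.eval (r ^ 2) * r ^ 1 * Real.exp (-r ^ 2) * innerMass q r
    + p.eval (r ^ 2) * r ^ 3 * Real.exp (-r ^ 2) * outerMass q r

theorem integrable_pairingDensity (p q : ℝ[X]) : Integrable (pairingDensity p q) :=
  (integrable_mul_innerMass p q 1).add (integrable_mul_outerMass p q 3)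

/-- The interaction of two radial polynomials through the kernel `max{r,s}⁻²`, as a bilinear form:
`∫∫ p(r²) q(s²) exp (-r² - s²) max{r,s}⁻² r³ s³ dr ds`. -/
noncomputable def pairing : ℝ[X] →ₗ[ℝ] ℝ[X] →ₗ[ℝ] ℝ :=
  LinearMap.mk₂ ℝ (fun p q => ∫ r in Ioi (0 : ℝ), pairingDensity p q r)
    (fun p p' q => by
      rw [← integral_add (integrable_pairingDensity p q).integrableOn
        (integrable_pairingDensity p' q).integrableOn]
      congr 1 with r
      simp only [pairingDensity, eval_add]
      ring)
    (fun c p q => by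
      rw [smul_eq_mul, ← integral_const_mul]
      congr 1 with r
      simp only [pairingDensity, eval_smul, smul_eq_mul]
      ring)
    (fun p q q' => by
      rw [← integral_add (integrable_pairingDensity p q).integrableOn
        (integrable_pairingDensity p q').integrableOn]
      congr 1 with r
      simp only [pairingDensity, innerMass_add, outerMass_add]
      ring)
    (fun c p q => by
      rw [smul_eq_mul, ← integral_const_mul]
      congr 1 with r
      simp only [pairingDensity, innerMass_smul, outerMass_smul]
      ring)

theorem pairing_apply (p q : ℝ[X]) :
    pairing p q = ∫ r in Ioi (0 : ℝ), pairingDensity p q r := rfl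

theorem innerMass_ladder (c : ℝ) (q : ℝ[X]) (r : ℝ) :
    innerMass (c • q + X * q - X * derivative q) r
      = (c + 2) * innerMass q r - q.eval (r ^ 2) * r ^ 4 * Real.exp (-r ^ 2) / 2 := by
  have hi := (integrable_eval_sq_mul_pow_mul_exp_neg_sq
    (c • q + X * q - X * derivative q) 3).intervalIntegrable (a := 0) (b := r)
  have hq := ((integrable_eval_sq_mul_pow_mul_exp_neg_sq q 3).intervalIntegrable
    (a := 0) (b := r)).const_mul (c + 2)
  have h := intervalIntegral.integral_eq_sub_of_hasDerivAt
    (fun s _ => ((hasDerivAt_eval_sq_mul_pow_mul_exp_neg_sq q 3 s).div_const (-2)).congr_deriv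
      (show _ = (c • q + X * q - X * derivative q).eval (s ^ 2) * s ^ 3 * Real.exp (-s ^ 2)
        - (c + 2) * (q.eval (s ^ 2) * s ^ 3 * Real.exp (-s ^ 2)) by
        simp
        ring)) (hi.sub hq)
  rw [intervalIntegral.integral_sub hi hq, intervalIntegral.integral_const_mul] at h
  simp only [innerMass]
  norm_num at h ⊢
  linarith

theorem outerMass_ladder (c : ℝ) (q : ℝ[X]) (r : ℝ) :
    outerMass (c • q + X * q - X * derivative q) r
      = (c + 1) * outerMass q r + q.eval (r ^ 2) * r ^ 2 * Real.exp (-r ^ 2) / 2 := by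
  have hi := (integrable_eval_sq_mul_pow_mul_exp_neg_sq
    (c • q + X * q - X * derivative q) 1).integrableOn (s := Ioi r)
  have hq := ((integrable_eval_sq_mul_pow_mul_exp_neg_sq q 1).integrableOn
    (s := Ioi r)).const_mul (c + 1)
  have hd : ∀ s : ℝ, HasDerivAt
      (fun s => q.eval (s ^ 2) * s ^ (1 + 1) * Real.exp (-s ^ 2) / (-2)) _ s := fun s =>
    ((hasDerivAt_eval_sq_mul_pow_mul_exp_neg_sq q 1 s).div_const (-2)).congr_deriv
      (show _ = (c • q + X * q - X * derivative q).eval (s ^ 2) * s ^ 1 * Real.exp (-s ^ 2)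
        - (c + 1) * (q.eval (s ^ 2) * s ^ 1 * Real.exp (-s ^ 2)) by
        simp
        ring)
  have h := integral_Ioi_of_hasDerivAt_of_tendsto' (fun s _ => hd s) (hi.sub hq)
    (tendsto_zero_of_hasDerivAt_of_integrableOn_Ioi (fun s (_ : s ∈ Ioi r) => hd s) (hi.sub hq)
      ((integrable_eval_sq_mul_pow_mul_exp_neg_sq q 2).div_const (-2)).integrableOn)
  rw [integral_sub hi hq, integral_const_mul] at h
  simp only [outerMass]
  norm_num at h ⊢
  linarith

/-- The Euler (scaling) identity for the pairing: its kernel is homogeneous of degree one in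
the variables `r², s²`. -/
theorem pairing_ladder (c c' : ℝ) (hc : c + c' = -3) (p q : ℝ[X]) :
    pairing (c • p + X * p - X * derivative p) q
      + pairing p (c' • q + X * q - X * derivative q) = 0 := by
  have hi := integrable_pairingDensity (c • p + X * p - X * derivative p) q
  have hi' := integrable_pairingDensity p (c' • q + X * q - X * derivative q)
  let F : ℝ → ℝ := fun r =>
    (p.eval (r ^ 2) * r ^ (1 + 1) * Real.exp (-r ^ 2) * innerMass q r
      + p.eval (r ^ 2) * r ^ (3 + 1) * Real.exp (-r ^ 2) * outerMass q r) / (-2)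
  have hF : ∀ r, HasDerivAt F (pairingDensity (c • p + X * p - X * derivative p) q r
      + pairingDensity p (c' • q + X * q - X * derivative q) r) r := fun r => by
    refine ((((hasDerivAt_eval_sq_mul_pow_mul_exp_neg_sq p 1 r).mul
      (hasDerivAt_innerMass q r)).add ((hasDerivAt_eval_sq_mul_pow_mul_exp_neg_sq p 3 r).mul
      (hasDerivAt_outerMass q r))).div_const (-2)).congr_deriv ?_
    simp only [pairingDensity, innerMass_ladder, outerMass_ladder]
    obtain rfl : c' = -3 - c := by linarith
    simp
    ring
  have hFi : Integrable F :=
    ((integrable_mul_innerMass p q 2).add (integrable_mul_outerMass p q 4)).div_const (-2)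
  rw [pairing_apply, pairing_apply, ← integral_add hi.integrableOn hi'.integrableOn,
    integral_Ioi_of_hasDerivAt_of_tendsto' (fun r _ => hF r) (hi.add hi').integrableOn
      (tendsto_zero_of_hasDerivAt_of_integrableOn_Ioi (fun r (_ : r ∈ Ioi 0) => hF r)
        (hi.add hi').integrableOn hFi.integrableOn)]
  simp [F]

/-- The generalized Laguerre polynomial `L_n^{(1)}` as a formal polynomial. -/
noncomputable def lagPoly (n : ℕ) : ℝ[X] :=
  ∑ k ∈ Finset.range (n + 1),
    C ((-1 : ℝ) ^ k * ((n + 1).choose (n - k) : ℝ) / (Nat.factorial k : ℝ)) * X ^ k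

theorem eval_lagPoly (n : ℕ) (x : ℝ) : (lagPoly n).eval x = Lag n x := by
  simp only [lagPoly, Lag, Polynomial.eval_finsetSum, Polynomial.eval_mul, Polynomial.eval_C,
    Polynomial.eval_pow, Polynomial.eval_X]
  exact Finset.sum_congr rfl fun k _ => by ring

theorem coeff_lagPoly (n k : ℕ) :
    (lagPoly n).coeff k = (-1 : ℝ) ^ k * ((n + 1).choose (k + 1) : ℝ) / (Nat.factorial k : ℝ) := by
  simp only [lagPoly, Polynomial.finsetSum_coeff, Polynomial.coeff_C_mul_X_pow]
  rw [Finset.sum_ite_eq]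
  split_ifs with hk
  · rw [← Nat.choose_symm_of_eq_add (show n + 1 = n - k + (k + 1) by grind)]
  · rw [Nat.choose_eq_zero_of_lt (by grind)]
    simp

theorem lagPoly_lower (n : ℕ) :
    ((n + 1 : ℕ) + 1 : ℝ) • lagPoly n
      = ((n + 1 : ℕ) : ℝ) • lagPoly (n + 1) - X * derivative (lagPoly (n + 1)) := by
  ext k
  have hX : (X * derivative (lagPoly (n + 1))).coeff k = k * (lagPoly (n + 1)).coeff k := by
    cases k <;> simp [coeff_X_mul, coeff_derivative, mul_comm]
  have h := Nat.choose_mul_succ_eq (n + 1) (k + 1)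
  simp only [coeff_smul, coeff_sub, hX, coeff_lagPoly, smul_eq_mul]
  have h' : ((n + 1).choose (k + 1) : ℝ) * (n + 2)
      = ((n + 2).choose (k + 1) : ℝ) * (n + 1 - k) := by
    rcases le_or_gt k (n + 1) with hk | hk
    · rw [show n + 1 + 1 - (k + 1) = n + 1 - k by omega] at h
      have := congrArg (Nat.cast (R := ℝ)) h
      push_cast [Nat.cast_sub hk] at this
      linarith
    · simp [Nat.choose_eq_zero_of_lt (show n + 1 < k + 1 by omega),
        Nat.choose_eq_zero_of_lt (show n + 2 < k + 1 by omega)]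
  push_cast
  linear_combination (-1 : ℝ) ^ k / (Nat.factorial k : ℝ) * h'

theorem X_mul_derivative_lagPoly_zero : X * derivative (lagPoly 0) = 0 := by
  simp [lagPoly]

theorem lagPoly_raise (n : ℕ) :
    ((n : ℝ) + 1) • lagPoly (n + 1)
      = X * derivative (lagPoly n) + ((n : ℝ) + 2) • lagPoly n - X * lagPoly n := by
  ext k
  simp only [coeff_smul, coeff_sub, coeff_add, smul_eq_mul]
  cases k with
  | zero =>
    simp [coeff_lagPoly]
    ring
  | succ m =>
    have h := congrArg (Nat.cast (R := ℝ)) (Nat.choose_succ_right_eq (n + 1) (m + 1))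
    have hpas := congrArg (Nat.cast (R := ℝ)) (Nat.choose_succ_succ' (n + 1) (m + 1))
    have h' : ((n + 1).choose (m + 2) : ℝ) * (m + 2)
        = ((n + 1).choose (m + 1) : ℝ) * (n - m) := by
      rcases le_or_gt m n with hm | hm
      · rw [show n + 1 - (m + 1) = n - m by omega] at h
        push_cast [Nat.cast_sub hm] at h
        linarith
      · simp [Nat.choose_eq_zero_of_lt (show n + 1 < m + 1 by omega),
          Nat.choose_eq_zero_of_lt (show n + 1 < m + 2 by omega)]
    simp only [coeff_X_mul, coeff_derivative, coeff_lagPoly, Nat.factorial_succ]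
    have hf : (Nat.factorial m : ℝ) ≠ 0 := by positivity
    push_cast at hpas ⊢
    rw [hpas]
    field_simp
    linear_combination (-(-1 : ℝ) ^ (m + 1)) * h'

theorem setIntegral_kernel (q : ℝ[X]) {r : ℝ} (hr : 0 < r) :
    ∫ s in Ioi (0 : ℝ), q.eval (s ^ 2) * s ^ 3 * Real.exp (-s ^ 2) / (max r s) ^ 2
      = innerMass q r / r ^ 2 + outerMass q r := by
  have hin : EqOn (fun s : ℝ => q.eval (s ^ 2) * s ^ 3 * Real.exp (-s ^ 2) / (max r s) ^ 2)
      (fun s => q.eval (s ^ 2) * s ^ 3 * Real.exp (-s ^ 2) / r ^ 2) (Ioc 0 r) := fun s hs => by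
    simp only [max_eq_left hs.2]
  have hout : EqOn (fun s : ℝ => q.eval (s ^ 2) * s ^ 3 * Real.exp (-s ^ 2) / (max r s) ^ 2)
      (fun s => q.eval (s ^ 2) * s ^ 1 * Real.exp (-s ^ 2)) (Ioi r) := fun s hs => by
    have hs0 : s ≠ 0 := (hr.trans hs).ne'
    simp only [max_eq_right (le_of_lt (mem_Ioi.1 hs))]
    field_simp
  rw [← Ioc_union_Ioi_eq_Ioi hr.le, setIntegral_union Ioc_disjoint_Ioi_same measurableSet_Ioi
    ((integrableOn_congr_fun hin measurableSet_Ioc).2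
      ((integrable_eval_sq_mul_pow_mul_exp_neg_sq q 3).div_const _).integrableOn)
    ((integrableOn_congr_fun hout measurableSet_Ioi).2
      (integrable_eval_sq_mul_pow_mul_exp_neg_sq q 1).integrableOn),
    setIntegral_congr_fun measurableSet_Ioc hin, setIntegral_congr_fun measurableSet_Ioi hout,
    integral_div, innerMass, outerMass, intervalIntegral.integral_of_le hr.le]

theorem Scoef_eq_pairing (n j k l : ℕ) :
    Scoef n j k l = Real.sqrt (2 / (n + 1)) * Real.sqrt (2 / (j + 1)) * Real.sqrt (2 / (k + 1))
      * Real.sqrt (2 / (l + 1)) * pairing (lagPoly n * lagPoly l) (lagPoly j * lagPoly k) := by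
  rw [Scoef, pairing_apply, ← integral_const_mul]
  refine setIntegral_congr_fun measurableSet_Ioi fun r hr => ?_
  have hr0 : r ≠ 0 := (mem_Ioi.1 hr).ne'
  have hexp : ∀ t : ℝ, Real.exp (-t ^ 2) = Real.exp (-t ^ 2 / 2) * Real.exp (-t ^ 2 / 2) :=
    fun t => by rw [← Real.exp_add, add_halves]
  have hkernel := setIntegral_kernel (lagPoly j * lagPoly k) (mem_Ioi.1 hr)
  calc ∫ s in Ioi (0:ℝ), efun n r * efun j s * efun k s * efun l r / (max r s)^2 * r^3 * s^3
      = ∫ s in Ioi (0:ℝ), (efun n r * efun l r * r ^ 3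
          * (Real.sqrt (2 / (j + 1)) * Real.sqrt (2 / (k + 1))))
          * ((lagPoly j * lagPoly k).eval (s ^ 2) * s ^ 3 * Real.exp (-s ^ 2)
            / (max r s) ^ 2) := by
        congr 1 with s
        simp only [efun, Polynomial.eval_mul, eval_lagPoly, hexp s]
        ring
    _ = _ := by
        rw [integral_const_mul, hkernel]
        simp only [efun, pairingDensity, Polynomial.eval_mul, eval_lagPoly, hexp r]
        field_simp

theorem Stilde_natCast (n j k l : ℕ) :
    Stilde n j k l = 4 * pairing (lagPoly n * lagPoly l) (lagPoly j * lagPoly k) := by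
  have hsqrt : ∀ m : ℕ, Real.sqrt ((m : ℝ) + 1) * Real.sqrt (2 / (m + 1)) = Real.sqrt 2 :=
    fun m => by
      rw [← Real.sqrt_mul (by positivity)]
      congr 1
      field_simp
  have h2 : Real.sqrt 2 * Real.sqrt 2 = 2 := Real.mul_self_sqrt (by norm_num)
  rw [Stilde, if_pos (by simp), Int.toNat_natCast, Int.toNat_natCast, Int.toNat_natCast,
    Int.toNat_natCast, Scoef_eq_pairing]
  simp only [Int.cast_natCast]
  rw [Real.sqrt_mul (by positivity), Real.sqrt_mul (by positivity), Real.sqrt_mul (by positivity)]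
  set P := pairing (lagPoly n * lagPoly l) (lagPoly j * lagPoly k)
  calc _ = (Real.sqrt ((n : ℝ) + 1) * Real.sqrt (2 / (n + 1)))
        * (Real.sqrt ((j : ℝ) + 1) * Real.sqrt (2 / (j + 1)))
        * (Real.sqrt ((k : ℝ) + 1) * Real.sqrt (2 / (k + 1)))
        * (Real.sqrt ((l : ℝ) + 1) * Real.sqrt (2 / (l + 1))) * P := by ring
    _ = (Real.sqrt 2 * Real.sqrt 2) * (Real.sqrt 2 * Real.sqrt 2) * P := by
        simp only [hsqrt]
        ring
    _ = 4 * P := by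
        rw [h2]
        ring

theorem Stilde_lower_left (n j k l : ℕ) :
    ((n : ℝ) + 1) * Stilde ((n : ℤ) - 1) j k l
      = 4 * pairing (((n : ℝ) • lagPoly n - X * derivative (lagPoly n)) * lagPoly l)
          (lagPoly j * lagPoly k) := by
  cases n with
  | zero => simp [Stilde, X_mul_derivative_lagPoly_zero]
  | succ n =>
    rw [← lagPoly_lower, show ((n + 1 : ℕ) : ℤ) - 1 = (n : ℤ) by simp, Stilde_natCast,
      smul_mul_assoc, map_smul, LinearMap.smul_apply, smul_eq_mul]
    ring

theorem Stilde_lower_right (n j k l : ℕ) :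
    ((j : ℝ) + 1) * Stilde n ((j : ℤ) - 1) k l
      = 4 * pairing (lagPoly n * lagPoly l)
          (((j : ℝ) • lagPoly j - X * derivative (lagPoly j)) * lagPoly k) := by
  cases j with
  | zero => simp [Stilde, X_mul_derivative_lagPoly_zero]
  | succ j =>
    rw [← lagPoly_lower, show ((j + 1 : ℕ) : ℤ) - 1 = (j : ℤ) by simp, Stilde_natCast,
      smul_mul_assoc, map_smul, smul_eq_mul]
    ring

/-- Lowering one factor of a product of Laguerre polynomials minus raising the other is a first
order operator applied to the product. -/
theorem lagPoly_lower_mul_sub_mul_raise (n l : ℕ) :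
    ((n : ℝ) • lagPoly n - X * derivative (lagPoly n)) * lagPoly l
        - ((l : ℝ) + 1) • (lagPoly n * lagPoly (l + 1))
      = ((n : ℝ) - l - 2) • (lagPoly n * lagPoly l) + X * (lagPoly n * lagPoly l)
        - X * derivative (lagPoly n * lagPoly l) := by
  rw [← mul_smul_comm, lagPoly_raise]
  simp only [derivative_mul, smul_eq_C_mul, C_sub, C_add]
  ring

/-- The identity `D′_{njkl} = 0` satisfied by the interaction coefficients of the
four-dimensional Schrödinger–Newton–Hooke resonant system when `n + j = k + l + 1`. -/
theorem stmt10 (n j k l : ℕ) (h : n + j = k + l + 1) :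
    ((n:ℝ) + 1) * Stilde ((n:ℤ) - 1) (j:ℤ) (k:ℤ) (l:ℤ)
      + ((j:ℝ) + 1) * Stilde (n:ℤ) ((j:ℤ) - 1) (k:ℤ) (l:ℤ)
      - ((k:ℝ) + 1) * Stilde (n:ℤ) (j:ℤ) ((k:ℤ) + 1) (l:ℤ)
      - ((l:ℝ) + 1) * Stilde (n:ℤ) (j:ℤ) (k:ℤ) ((l:ℤ) + 1) = 0 := by
  have hc : ((n : ℝ) - l - 2) + ((j : ℝ) - k - 2) = -3 := by
    have := congrArg (Nat.cast (R := ℝ)) h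
    push_cast at this
    linarith
  have key := pairing_ladder _ _ hc (lagPoly n * lagPoly l) (lagPoly j * lagPoly k)
  rw [← lagPoly_lower_mul_sub_mul_raise, ← lagPoly_lower_mul_sub_mul_raise, map_sub, map_sub,
    map_smul, map_smul, LinearMap.sub_apply, LinearMap.smul_apply, smul_eq_mul, smul_eq_mul] at key
  have hk := Stilde_natCast n j (k + 1) l
  have hl := Stilde_natCast n j k (l + 1)
  push_cast at hk hl
  rw [Stilde_lower_left, Stilde_lower_right, hk, hl]
  linear_combination 4 * key
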